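/- arXiv:2403.20220 — 2 statements merged into one kernel-verified Lean document; each statement's English description precedes it below -/
import Mathlib

section
/- Let π : B → T be a surjective ring homomorphism whose kernel is a regular ideal of B (contains a non-zero-divisor of B), let R be a subring of T such that T is an overring of R, and set A := π⁻¹(R). Then A is a Prüfer ring if and only if both B and R are Prüfer rings. -/
/-- A Prüfer ring: every finitely generated regular ideal is invertible
(as a submodule of the total ring of fractions). -/
def IsPruferRing (R : Type*) [CommRing R] : Prop :=
  ∀ I : Ideal R, I.FG → (∃ r ∈ I, r ∈ nonZeroDivisors R) →
    ∃ J : Submodule R (FractionRing R),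
      Submodule.map (Algebra.linearMap R (FractionRing R)) I * J = 1

/-- Finite generating sets of regular ideals in a Prüfer ring are locally principal. -/
theorem prufer_local {R : Type*} [CommRing R] (h : IsPruferRing R) (S : Finset R)
    (hS : ∃ r ∈ S, r ∈ nonZeroDivisors R) (M : Ideal R) [hM : M.IsPrime] :
    ∃ a ∈ S, ∃ s, s ∉ M ∧ ∀ x ∈ S, ∃ w, s * x = a * w := by
  have hinj : Function.Injective (algebraMap R (FractionRing R)) :=
    IsLocalization.injective _ le_rfl
  obtain ⟨J, hJ⟩ := h (Ideal.span S) ⟨S, rfl⟩ (by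
    obtain ⟨r, hr, h2⟩ := hS
    exact ⟨r, Ideal.subset_span hr, h2⟩)
  have key : ∀ x ∈ S, ∀ q ∈ J, ∃ z : R, algebraMap R (FractionRing R) z
      = algebraMap R (FractionRing R) x * q := by
    intro x hx q hq
    have : algebraMap R (FractionRing R) x * q ∈ (1 : Submodule R (FractionRing R)) := by
      rw [← hJ]
      exact Submodule.mul_mem_mul ⟨x, Ideal.subset_span hx, rfl⟩ hq
    simpa [Submodule.mem_one] using this
  have main : ∃ a ∈ S, ∃ q ∈ J, ∃ z : R, z ∉ M ∧ algebraMap R (FractionRing R) z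
      = algebraMap R (FractionRing R) a * q := by
    by_contra hcon
    push Not at hcon
    have hle : Submodule.map (Algebra.linearMap R (FractionRing R)) (Ideal.span (S : Set R)) * J
        ≤ Submodule.map (Algebra.linearMap R (FractionRing R)) M := by
      rw [Submodule.mul_le]
      rintro _ ⟨m, hm, rfl⟩ q hq
      change m ∈ Submodule.span R (S : Set R) at hm
      induction hm using Submodule.span_induction with
      | mem x hx =>
        obtain ⟨z, hz⟩ := key x hx q hq
        refine ⟨z, ?_, hz⟩
        by_contra hzM
        exact hcon x hx q hq z hzM hz
      | zero => simp
      | add x y _ _ hx hy =>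
        rw [map_add, add_mul]
        exact Submodule.add_mem _ hx hy
      | smul a x _ hx =>
        rw [map_smul, smul_mul_assoc]
        exact Submodule.smul_mem _ _ hx
    rw [hJ] at hle
    obtain ⟨m, hm, hm1⟩ := hle (Submodule.one_le.mp le_rfl)
    have : m = 1 := hinj (by simpa using hm1)
    exact hM.ne_top ((Ideal.eq_top_iff_one _).2 (this ▸ hm))
  obtain ⟨a, ha, q, hq, z, hz, hzq⟩ := main
  refine ⟨a, ha, z, hz, fun x hx => ?_⟩
  obtain ⟨w, hw⟩ := key x hx q hq
  refine ⟨w, hinj ?_⟩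
  rw [map_mul, map_mul, hzq, hw]
  ring

theorem prufer_of_pairs {R : Type*} [CommRing R]
    (h : ∀ a b : R, b ∈ nonZeroDivisors R → ∀ M : Ideal R, M.IsPrime →
      ∃ s, s ∉ M ∧ ((∃ w, s * a = b * w) ∨ (∃ w, s * b = a * w))) : IsPruferRing R := by
  classical
  rintro I ⟨S, hS⟩ ⟨r, hrI, hr⟩
  have lp : ∀ M : Ideal R, M.IsPrime → ∃ a ∈ I, ∃ s, s ∉ M ∧ (∃ y, s * r = a * y) ∧
      ∀ x ∈ I, ∃ w, s * x = a * w := by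
    intro M hM
    have ind : ∀ F : Finset R, (∀ x ∈ F, x ∈ I) → ∃ a ∈ I, ∃ s, s ∉ M ∧ (∃ y, s * r = a * y) ∧
      ∀ x ∈ F, ∃ w, s * x = a * w := by
      intro F
      induction F using Finset.induction_on with
      | empty =>
        intro _
        exact ⟨r, hrI, 1, fun h1 => hM.ne_top ((Ideal.eq_top_iff_one _).2 h1),
          ⟨1, by ring⟩, by simp⟩
      | insert x F _ ih =>
        intro hF
        obtain ⟨a, ha, s, hs, ⟨y, hy⟩, hw⟩ := ih fun t ht => hF t (Finset.mem_insert_of_mem ht)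
        obtain ⟨s', hs', hc⟩ := h (x * y) r hr M hM
        have hss : s * s' ∉ M := fun hh => (hM.mem_or_mem hh).elim hs hs'
        rcases hc with ⟨z, hz⟩ | ⟨z, hz⟩
        · refine ⟨a, ha, s * s', hss, ⟨y * s', by linear_combination s' * hy⟩, ?_⟩
          intro t ht
          rcases Finset.mem_insert.1 ht with rfl | ht
          · refine ⟨z, ?_⟩
            have : (s * s' * t - a * z) * r = 0 := by
              linear_combination a * hz + s' * t * hy
            exact sub_eq_zero.1 ((mul_right_mem_nonZeroDivisors_eq_zero_iff hr).1 this)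
          · obtain ⟨w, hw⟩ := hw t ht
            exact ⟨w * s', by linear_combination s' * hw⟩
        · have h2 : s' * a = x * (s * z) := by
            have : (s' * a - x * (s * z)) * r = 0 := by
              linear_combination a * hz - x * z * hy
            exact sub_eq_zero.1 ((mul_right_mem_nonZeroDivisors_eq_zero_iff hr).1 this)
          refine ⟨x, hF x (Finset.mem_insert_self _ _), s * s', hss,
            ⟨s * z * y, by linear_combination s' * hy + y * h2⟩, ?_⟩
          intro t ht
          rcases Finset.mem_insert.1 ht with rfl | ht
          · exact ⟨s * s', by ring⟩
          · obtain ⟨w, hw⟩ := hw t ht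
            exact ⟨s * z * w, by linear_combination s' * hw + w * h2⟩
    obtain ⟨a, ha, s, hs, hy, hw⟩ := ind S (fun x hx => hS ▸ Ideal.subset_span hx)
    refine ⟨a, ha, s, hs, hy, fun x hx => ?_⟩
    rw [← hS] at hx
    induction hx using Submodule.span_induction with
    | mem x hx => exact hw x hx
    | zero => exact ⟨0, by simp⟩
    | add x y _ _ hx hy =>
      obtain ⟨u, hu⟩ := hx
      obtain ⟨v, hv⟩ := hy
      exact ⟨u + v, by linear_combination hu + hv⟩
    | smul c x _ hx =>
      obtain ⟨u, hu⟩ := hx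
      exact ⟨c * u, by rw [smul_eq_mul]; linear_combination c * hu⟩
  set K := FractionRing R
  set N := Submodule.map (Algebra.linearMap R K) I with hN
  refine ⟨1 / N, le_antisymm Submodule.mul_one_div_le_one ?_⟩
  let L : Ideal R := Submodule.comap (Algebra.linearMap R K) (N * (1 / N))
  have hL : L = ⊤ := by
    by_contra hne
    obtain ⟨M, hM, hLM⟩ := Ideal.exists_le_maximal L hne
    have hMp := hM.isPrime
    obtain ⟨a, ha, s, hs, ⟨y, hy⟩, hw⟩ := lp M hMp
    refine hs ((or_self_iff).1 (hMp.mem_or_mem (hLM (?_ : s * s ∈ L))))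
    change algebraMap R K (s * s) ∈ N * (1 / N)
    let q : K := IsLocalization.mk' K (s * y) ⟨r, hr⟩
    have hq : ∀ x u : R, s * y * x = r * u → algebraMap R K x * q = algebraMap R K u := by
      intro x u hxu
      rw [IsLocalization.mul_mk'_eq_mk'_of_mul, IsLocalization.mk'_eq_iff_eq_mul, ← map_mul]
      congr 1
      change x * (s * y) = u * r
      linear_combination hxu
    rw [← hq a (s * s) (by linear_combination -s * hy)]
    refine Submodule.mul_mem_mul ⟨a, ha, rfl⟩ ?_
    rw [Submodule.mem_div_iff_forall_mul_mem]
    rintro _ ⟨x, hx, rfl⟩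
    obtain ⟨w, hw⟩ := hw x hx
    rw [Submodule.mem_one]
    refine ⟨s * w, ?_⟩
    have e := hq x (s * w) (by linear_combination y * hw - w * hy)
    rw [← e]
    exact mul_comm _ _
  have : (1 : R) ∈ L := hL ▸ Submodule.mem_top
  rw [Submodule.one_le]
  simpa [L] using this

/-- The elementwise form of invertibility of two-generated regular ideals. -/
theorem prufer_pair {R : Type*} [CommRing R] (h : IsPruferRing R) (a b : R)
    (hb : b ∈ nonZeroDivisors R) : ∃ y z w, a * y = b * z ∧ a * (1 - z) = b * w := by
  classical
  let L : Ideal R :=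
    { carrier := {z | (∃ y, a * y = b * z)}
      zero_mem' := ⟨0, by simp⟩
      add_mem' := by
        rintro u v ⟨y, hy⟩ ⟨z, hz⟩
        exact ⟨y + z, by linear_combination hy + hz⟩
      smul_mem' := by
        rintro c u ⟨y, hy⟩
        exact ⟨c * y, by rw [smul_eq_mul]; linear_combination c * hy⟩ }
  let L' : Ideal R :=
    { carrier := {z | (∃ w, a * z = b * w)}
      zero_mem' := ⟨0, by simp⟩
      add_mem' := by
        rintro u v ⟨y, hy⟩ ⟨z, hz⟩
        exact ⟨y + z, by linear_combination hy + hz⟩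
      smul_mem' := by
        rintro c u ⟨y, hy⟩
        exact ⟨c * y, by rw [smul_eq_mul]; linear_combination c * hy⟩ }
  have htop : L ⊔ L' = ⊤ := by
    by_contra hne
    obtain ⟨M, hM, hLM⟩ := Ideal.exists_le_maximal _ hne
    have hMp := hM.isPrime
    obtain ⟨c, hc, s, hs, hw⟩ := prufer_local h {a, b} ⟨b, by simp, hb⟩ M
    simp only [Finset.mem_insert, Finset.mem_singleton] at hc
    rcases hc with rfl | rfl
    · obtain ⟨w, hw⟩ := hw b (by simp)
      exact hs (hLM (Ideal.mem_sup_left ⟨w, by linear_combination -hw⟩))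
    · obtain ⟨w, hw⟩ := hw a (by simp)
      exact hs (hLM (Ideal.mem_sup_right ⟨w, by linear_combination hw⟩))
  obtain ⟨z, ⟨y, hy⟩, u, ⟨w, hw⟩, hzu⟩ := Submodule.mem_sup.1 ((Ideal.eq_top_iff_one _).1 htop)
  refine ⟨y, z, w, hy, ?_⟩
  rw [← hw, ← hzu]
  ring

theorem stmt8 {B T : Type*} [CommRing B] [CommRing T] (π : B →+* T)
    (hπ : Function.Surjective π)
    (hker : ∃ b ∈ RingHom.ker π, b ∈ nonZeroDivisors B)
    (R : Subring T)
    (hover : ∃ j : T →+* FractionRing R, Function.Injective j ∧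
        ∀ r : R, j (r : T) = algebraMap R (FractionRing R) r) :
    IsPruferRing (Subring.comap π R) ↔ (IsPruferRing B ∧ IsPruferRing R) := by
  classical
  obtain ⟨c, hc, hcr⟩ := hker
  have hc0 : π c = 0 := hc
  have canc : ∀ {d : B}, d ∈ nonZeroDivisors B → ∀ {u v : B}, d * u = d * v → u = v := by
    intro d hd u v huv
    have : (u - v) * d = 0 := by linear_combination huv
    exact sub_eq_zero.1 ((mul_right_mem_nonZeroDivisors_eq_zero_iff hd).1 this)
  have memA : ∀ x : B, π x = 0 → x ∈ Subring.comap π R := fun x hx => by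
    rw [Subring.mem_comap, hx]; exact R.zero_mem
  have regA : ∀ x : Subring.comap π R, (x : B) ∈ nonZeroDivisors B →
      x ∈ nonZeroDivisors (Subring.comap π R) := by
    intro x hx
    rw [mem_nonZeroDivisors_iff_right]
    intro y hy
    apply Subtype.ext
    exact (mul_right_mem_nonZeroDivisors_eq_zero_iff hx).1 (by simpa using congrArg Subtype.val hy)
  constructor
  · intro hA
    constructor
    · apply prufer_of_pairs
      intro a b hb M hM
      obtain ⟨y, z, w, h1, h2⟩ := prufer_pair hA ⟨a * c, memA _ (by simp [hc0])⟩
        ⟨b * c, memA _ (by simp [hc0])⟩ (regA _ (mul_mem hb hcr))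
      have h1' := congrArg Subtype.val h1
      have h2' := congrArg Subtype.val h2
      simp only [Subring.coe_mul, AddSubgroupClass.coe_sub, Subring.coe_one] at h1' h2'
      have e1 : a * (y : B) = b * z := canc hcr (by linear_combination h1')
      have e2 : a * (1 - (z : B)) = b * w := canc hcr (by linear_combination h2')
      by_cases hz : (z : B) ∈ M
      · refine ⟨1 - z, fun hh => hM.ne_top ((Ideal.eq_top_iff_one _).2 ?_),
          Or.inl ⟨w, by linear_combination e2⟩⟩
        simpa using M.add_mem hh hz
      · exact ⟨z, hz, Or.inr ⟨y, by linear_combination -e1⟩⟩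
    · apply prufer_of_pairs
      intro a b hb P hP
      let ρ : Subring.comap π R →+* R := (π.comp (Subring.comap π R).subtype).codRestrict R
        (fun x => x.2)
      have hρ : Function.Surjective ρ := by
        intro r
        obtain ⟨x, hx⟩ := hπ r
        exact ⟨⟨x, by rw [Subring.mem_comap, hx]; exact r.2⟩, Subtype.ext hx⟩
      obtain ⟨α, rfl⟩ := hρ a
      obtain ⟨β, rfl⟩ := hρ b
      let γ : Subring.comap π R := ⟨c, memA c hc0⟩
      have hγ : ρ γ = 0 := Subtype.ext hc0
      obtain ⟨d, hd, s, hs, hw⟩ := prufer_local hA {α, β, γ} ⟨γ, by simp, regA _ hcr⟩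
        (P.comap ρ)
      refine ⟨ρ s, hs, ?_⟩
      obtain ⟨w1, hw1⟩ := hw α (by simp)
      obtain ⟨w2, hw2⟩ := hw β (by simp)
      simp only [Finset.mem_insert, Finset.mem_singleton] at hd
      rcases hd with rfl | rfl | rfl
      · exact Or.inr ⟨ρ w2, by rw [← map_mul, hw2, map_mul]⟩
      · exact Or.inl ⟨ρ w1, by rw [← map_mul, hw1, map_mul]⟩
      · exfalso
        have : ρ s * ρ β = 0 := by rw [← map_mul, hw2, map_mul, hγ, zero_mul]
        have h0 := (mul_right_mem_nonZeroDivisors_eq_zero_iff hb).1 this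
        exact hs (by rw [Ideal.mem_comap, h0]; exact P.zero_mem)
  · rintro ⟨hB, hR⟩
    obtain ⟨j, hj, hjr⟩ := hover
    -- comparison in the overring
    have F2 : ∀ (x : T) (P : Ideal R), P.IsPrime →
        (∃ s t : R, s ∉ P ∧ (s : T) * x = t) ∨ (∃ r s : R, s ∉ P ∧ (r : T) * x = s) := by
      intro x P hP
      obtain ⟨⟨a, b⟩, hab⟩ := IsLocalization.surj (nonZeroDivisors R) (j x)
      have hbx : x * ((b : R) : T) = a := hj (by rw [map_mul, hjr, hjr]; exact hab)
      have hbT : ∀ u v : T, ((b : R) : T) * u = (b : R) * v → u = v := by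
        intro u v huv
        have h1 := congrArg j huv
        rw [map_mul, map_mul, hjr] at h1
        exact hj ((IsLocalization.map_units (FractionRing R) b).mul_left_cancel h1)
      obtain ⟨y, z, w, h1, h2⟩ := prufer_pair hR a b b.2
      have h1' := congrArg Subtype.val h1
      have h2' := congrArg Subtype.val h2
      simp only [Subring.coe_mul, AddSubgroupClass.coe_sub, Subring.coe_one] at h1' h2'
      have e1 : x * (y : T) = z := hbT _ _ (by linear_combination h1' + y * hbx)
      have e2 : x * (1 - (z : T)) = w := hbT _ _ (by linear_combination h2' + (1 - (z : T)) * hbx)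
      by_cases hz : z ∈ P
      · refine Or.inl ⟨1 - z, w, fun hh => hP.ne_top ((Ideal.eq_top_iff_one _).2 ?_), ?_⟩
        · simpa using P.add_mem hh hz
        · push_cast
          linear_combination e2
      · exact Or.inr ⟨y, z, hz, by linear_combination e1⟩
    have F1 : ∀ (z : T) (P : Ideal R), P.IsPrime →
        (∃ (t : T) (s : R), s ∉ P ∧ t * z = s) ∨ (∃ (t : T) (s : R), s ∉ P ∧ t * (1 - z) = s) := by
      intro z P hP
      rcases F2 z P hP with ⟨s, t, hs, h⟩ | ⟨r, s, hs, h⟩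
      · by_cases ht : t ∈ P
        · refine Or.inr ⟨s, s - t, fun hh => hs (by simpa using P.add_mem hh ht), ?_⟩
          push_cast
          linear_combination -h
        · exact Or.inl ⟨s, t, ht, h⟩
      · exact Or.inl ⟨r, s, hs, h⟩
    apply prufer_of_pairs
    intro a b hb M hM
    have hbB : (b : B) ∈ nonZeroDivisors B := by
      rw [mem_nonZeroDivisors_iff_right]
      intro u hu
      have h1 : (⟨u * c, memA _ (by simp [hc0])⟩ : Subring.comap π R) * b = 0 := by
        apply Subtype.ext
        change u * c * (b : B) = 0
        linear_combination c * hu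
      have h2 := congrArg Subtype.val ((mul_right_mem_nonZeroDivisors_eq_zero_iff hb).1 h1)
      exact (mul_right_mem_nonZeroDivisors_eq_zero_iff hcr).1 h2
    obtain ⟨y, z, w, h1, h2⟩ := prufer_pair hB (a : B) b hbB
    by_cases hI : ∀ x : Subring.comap π R, π (x : B) = 0 → x ∈ M
    · -- `M` lies over a prime of `R`
      let ρ : Subring.comap π R →+* R := (π.comp (Subring.comap π R).subtype).codRestrict R
        (fun x => x.2)
      have hρ : Function.Surjective ρ := by
        intro r
        obtain ⟨x, hx⟩ := hπ r
        exact ⟨⟨x, by rw [Subring.mem_comap, hx]; exact r.2⟩, Subtype.ext hx⟩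
      have hkM : RingHom.ker ρ ≤ M := fun x hx => hI x (congrArg Subtype.val hx)
      have hP : (M.map ρ).IsPrime := Ideal.map_isPrime_of_surjective hρ hkM
      have hMP : ∀ x : Subring.comap π R, ρ x ∉ M.map ρ → x ∉ M :=
        fun x hx hh => hx (Ideal.mem_map_of_mem ρ hh)
      -- symmetric core
      have core : ∀ (f g : Subring.comap π R) (z y : B), (f : B) * y = g * z →
          (∃ (t : T) (s : R), s ∉ M.map ρ ∧ t * π z = s) →
          ∃ s, s ∉ M ∧ ((∃ w, s * f = g * w) ∨ (∃ w, s * g = f * w)) := by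
        rintro f g z y hfg ⟨t, s, hs, hts⟩
        obtain ⟨τ, rfl⟩ := hπ t
        rw [← map_mul] at hts
        have hτz : τ * z ∈ Subring.comap π R := by
          rw [Subring.mem_comap, hts]; exact s.2
        have hτM : (⟨τ * z, hτz⟩ : Subring.comap π R) ∉ M := by
          apply hMP
          convert hs
          exact Subtype.ext hts
        rcases F2 (π (τ * y)) _ hP with ⟨s', t', hs', h⟩ | ⟨r, s', hs', h⟩
        · obtain ⟨σ, rfl⟩ := hρ s'
          have h' : π ((σ : B) * (τ * y)) = t' := by rw [map_mul]; exact h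
          refine ⟨σ * ⟨τ * z, hτz⟩, fun hh => (hM.mem_or_mem hh).elim (hMP _ hs') hτM,
            Or.inr ⟨⟨(σ : B) * (τ * y), by rw [Subring.mem_comap, h']; exact t'.2⟩, ?_⟩⟩
          apply Subtype.ext
          change (σ : B) * (τ * z) * g = f * (σ * (τ * y))
          linear_combination -(σ : B) * τ * hfg
        · obtain ⟨σ, rfl⟩ := hρ r
          have h' : π ((σ : B) * (τ * y)) = s' := by rw [map_mul]; exact h
          refine ⟨⟨(σ : B) * (τ * y), by rw [Subring.mem_comap, h']; exact s'.2⟩, ?_,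
            Or.inl ⟨σ * ⟨τ * z, hτz⟩, ?_⟩⟩
          · apply hMP
            convert hs'
            exact Subtype.ext h'
          · apply Subtype.ext
            change (σ : B) * (τ * y) * f = g * (σ * (τ * z))
            linear_combination (σ : B) * τ * hfg
      rcases F1 (π z) _ hP with h | h
      · exact core a b z y h1 h
      · obtain ⟨s, hs, hh⟩ := core b a (1 - z) w h2.symm (by simpa using h)
        exact ⟨s, hs, hh.symm⟩
    · push Not at hI
      obtain ⟨x, hx, hxM⟩ := hI
      have hm : ∀ u : B, (x : B) * u ∈ Subring.comap π R := fun u => memA _ (by simp [hx])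
      by_cases hz : (⟨x * z, hm z⟩ : Subring.comap π R) ∈ M
      · refine ⟨⟨x * (1 - z), hm _⟩, fun hh => hxM ?_, Or.inl ⟨⟨x * w, hm w⟩, ?_⟩⟩
        · have := M.add_mem hh hz
          convert this using 1
          apply Subtype.ext
          change (x : B) = x * (1 - z) + x * z
          ring
        · apply Subtype.ext
          change (x : B) * (1 - z) * a = b * (x * w)
          linear_combination (x : B) * h2
      · refine ⟨_, hz, Or.inr ⟨⟨x * y, hm y⟩, ?_⟩⟩
        apply Subtype.ext
        change (x : B) * z * b = a * (x * y)
        linear_combination -(x : B) * h1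
end

section
/- Let R be a Noetherian pre-Prüfer ring. Then the Krull dimension of R is at most 1. -/
/-- A pre-Prüfer ring: every proper homomorphic image is a Prüfer ring. -/
def IsPrePruferRing (R : Type*) [CommRing R] : Prop :=
  ∀ I : Ideal R, I ≠ ⊥ → I ≠ ⊤ → IsPruferRing (R ⧸ I)

theorem prufer_idem {S : Type*} [CommRing S] (h : IsPruferRing S) (a b : S) (hab : a * b = 0)
    (hr : a + b ∈ nonZeroDivisors S) : ∃ e : S, a * (1 - e) = 0 ∧ b * e = 0 := by
  obtain ⟨J, hJ⟩ := h (Ideal.span {a, b}) (Submodule.fg_span (by simp))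
    ⟨a + b, Ideal.add_mem _ (Ideal.subset_span (by simp)) (Ideal.subset_span (by simp)), hr⟩
  have hinj : Function.Injective (algebraMap S (FractionRing S)) :=
    IsLocalization.injective _ le_rfl
  have hab' : algebraMap S (FractionRing S) a * algebraMap S (FractionRing S) b = 0 := by
    rw [← map_mul, hab, map_zero]
  have h1 : (1 : FractionRing S) ∈
      Submodule.map (Algebra.linearMap S (FractionRing S)) (Ideal.span {a, b}) * J := by
    rw [hJ]; exact Submodule.one_le.mp le_rfl
  have hmem : ∀ u ∈ J, ∃ e : S, algebraMap S (FractionRing S) e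
      = algebraMap S (FractionRing S) a * u := by
    intro u hu
    have : algebraMap S (FractionRing S) a * u ∈
        Submodule.map (Algebra.linearMap S (FractionRing S)) (Ideal.span {a, b}) * J :=
      Submodule.mul_mem_mul ⟨a, Ideal.subset_span (by simp), rfl⟩ hu
    rw [hJ] at this
    exact Submodule.mem_one.mp this
  have hspan : Submodule.map (Algebra.linearMap S (FractionRing S)) (Ideal.span {a, b})
      = Submodule.span S {algebraMap S (FractionRing S) a} ⊔
        Submodule.span S {algebraMap S (FractionRing S) b} := by
    rw [Ideal.span, Submodule.map_span, Set.image_pair, Submodule.span_insert]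
    rfl
  rw [hspan, Submodule.sup_mul, Submodule.mem_sup] at h1
  obtain ⟨x, hx, y, hy, hxy⟩ := h1
  obtain ⟨u, hu, rfl⟩ := Submodule.mem_span_singleton_mul.mp hx
  obtain ⟨v, hv, rfl⟩ := Submodule.mem_span_singleton_mul.mp hy
  obtain ⟨e, he⟩ := hmem u hu
  refine ⟨e, hinj ?_, hinj ?_⟩
  · rw [map_mul, map_sub, map_one, map_zero, he]
    linear_combination v * hab' - algebraMap S (FractionRing S) a * hxy
  · rw [map_mul, map_zero, he]
    linear_combination u * hab'

theorem prePrufer_comparable {R : Type*} [CommRing R] (h : IsPrePruferRing R) (p q m : Ideal R)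
    [p.IsPrime] [q.IsPrime] [m.IsPrime] (hp : p ≤ m) (hq : q ≤ m) (hne : p ⊓ q ≠ ⊥)
    (hpq : ¬ p ≤ q) (hqp : ¬ q ≤ p) : False := by
  obtain ⟨a, hap, haq⟩ := SetLike.not_le_iff_exists.mp hpq
  obtain ⟨b, hbq, hbp⟩ := SetLike.not_le_iff_exists.mp hqp
  have hm : m ≠ ⊤ := Ideal.IsPrime.ne_top inferInstance
  have htop : p ⊓ q ≠ ⊤ := fun ht => hm (top_le_iff.mp (ht ▸ inf_le_left.trans hp))
  obtain ⟨e, h1, h2⟩ := prufer_idem (h _ hne htop) (Ideal.Quotient.mk (p ⊓ q) a)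
    (Ideal.Quotient.mk (p ⊓ q) b)
    (by
      rw [← map_mul, Ideal.Quotient.eq_zero_iff_mem]
      exact ⟨p.mul_mem_right _ hap, q.mul_mem_left _ hbq⟩)
    (by
      rw [mem_nonZeroDivisors_iff_right]
      intro x
      obtain ⟨x, rfl⟩ := Ideal.Quotient.mk_surjective x
      rw [← map_add, ← map_mul, Ideal.Quotient.eq_zero_iff_mem, Ideal.Quotient.eq_zero_iff_mem]
      rintro ⟨hx1, hx2⟩
      refine ⟨(Ideal.IsPrime.mem_or_mem inferInstance hx1).resolve_right fun hc => hbp ?_,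
        (Ideal.IsPrime.mem_or_mem inferInstance hx2).resolve_right fun hc => haq ?_⟩
      · exact (Ideal.add_mem_iff_right _ hap).mp hc
      · exact (Ideal.add_mem_iff_left _ hbq).mp hc)
  obtain ⟨e, rfl⟩ := Ideal.Quotient.mk_surjective e
  rw [← map_one (Ideal.Quotient.mk (p ⊓ q)), ← map_sub, ← map_mul,
    Ideal.Quotient.eq_zero_iff_mem] at h1
  rw [← map_mul, Ideal.Quotient.eq_zero_iff_mem] at h2
  have h1' := (Ideal.IsPrime.mem_or_mem inferInstance h1.2).resolve_left haq
  have h2' := (Ideal.IsPrime.mem_or_mem inferInstance h2.1).resolve_left hbp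
  apply hm
  rw [Ideal.eq_top_iff_one]
  simpa using m.add_mem (hq h1') (hp h2')

theorem stmt19 {R : Type*} [CommRing R] [IsNoetherianRing R] (h : IsPrePruferRing R) :
    ringKrullDim R ≤ 1 := by
  rw [ringKrullDim, Order.krullDim_le_one_iff]
  intro x
  rw [isMax_iff_forall_not_lt, isMin_iff_forall_not_lt]
  by_contra! hc
  obtain ⟨⟨⟨p0, i0⟩, h01⟩, ⟨p2, i2⟩, h12⟩ := hc
  obtain ⟨p1, i1⟩ := x
  replace h01 : p0 < p1 := h01
  replace h12 : p1 < p2 := h12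
  obtain ⟨y, hy2, hy1⟩ := SetLike.exists_of_lt h12
  have hle : p0 ⊔ Ideal.span {y} ≤ p2 :=
    sup_le (h01.le.trans h12.le) ((Ideal.span_singleton_le_iff_mem _).mpr hy2)
  obtain ⟨q, hq, hq2⟩ := Ideal.exists_minimalPrimes_le hle
  have iq : q.IsPrime := hq.1.1
  have h0q : p0 ≤ q := le_sup_left.trans hq.1.2
  have hyq : y ∈ q := (Ideal.span_singleton_le_iff_mem _).mp (le_sup_right.trans hq.1.2)
  have hq1 : ¬ q ≤ p1 := fun hc => hy1 (hc hyq)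
  refine prePrufer_comparable h p1 q p2 h12.le hq2 ?_ ?_ hq1
  · intro hb
    have : p1 * q ≤ p0 := Ideal.mul_le_inf.trans (hb ▸ bot_le)
    rcases (Ideal.IsPrime.mul_le i0).mp this with hc | hc
    · exact h01.not_ge hc
    · exact hq1 (hc.trans h01.le)
  · intro h1q
    have hht := Ideal.map_height_le_one_of_mem_minimalPrimes hq
    have hs := Ideal.Quotient.mk_surjective (I := p0)
    have j1 : (p1.map (Ideal.Quotient.mk p0)).IsPrime :=
      Ideal.map_isPrime_of_surjective hs (by simpa using h01.le)
    have jq : (q.map (Ideal.Quotient.mk p0)).IsPrime :=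
      Ideal.map_isPrime_of_surjective hs (by simpa using h0q)
    have c1 : (p1.map (Ideal.Quotient.mk p0)).comap (Ideal.Quotient.mk p0) = p1 := by
      rw [Ideal.comap_map_of_surjective _ hs, ← RingHom.ker_eq_comap_bot, Ideal.mk_ker]
      exact sup_eq_left.mpr h01.le
    have cq : (q.map (Ideal.Quotient.mk p0)).comap (Ideal.Quotient.mk p0) = q := by
      rw [Ideal.comap_map_of_surjective _ hs, ← RingHom.ker_eq_comap_bot, Ideal.mk_ker]
      exact sup_eq_left.mpr h0q
    have hlt : p1.map (Ideal.Quotient.mk p0) < q.map (Ideal.Quotient.mk p0) := by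
      refine lt_of_le_of_ne (Ideal.map_mono h1q) fun he => hq1 ?_
      rw [← c1, he, cq]
    have hb : (⊥ : Ideal (R ⧸ p0)) < p1.map (Ideal.Quotient.mk p0) := by
      refine lt_of_le_of_ne bot_le fun he => h01.ne ?_
      rw [← c1, ← he, ← RingHom.ker_eq_comap_bot, Ideal.mk_ker]
    have e1 := Ideal.height_add_one_le_of_lt_of_isPrime hlt
    have e2 := Ideal.height_add_one_le_of_lt_of_isPrime hb
    rw [Ideal.height_bot, zero_add] at e2
    have e3 : (1 : ℕ∞) + 1 ≤ 1 := (add_le_add_left e2 1).trans (e1.trans hht)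
    exact absurd e3 (by decide)
end
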